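/- arXiv:2512.13075 — 2 statements merged into one kernel-verified Lean document; each statement's English description precedes it below -/
import Mathlib

section
/- Let (X,d,f) be a TDS, μ a Borel probability measure on X, K ⊆ X a Borel set, α ≥ 0, φ : X → ℝ a positive continuous function, and s ∈ (0,∞). If P_μ^α(f,x,φ) ≤ s for all x ∈ K, then dim_BS^α(f,K,φ) ≤ s. -/
open Filter Set MeasureTheory ENNReal
open scoped Classical NNReal

noncomputable section

namespace AlphaBS

variable {X : Type*}

/-- Birkhoff sum `S_n φ (x) = ∑_{j<n} φ(f^j x)`. -/
def birk (f : X → X) (φ : X → ℝ) (n : ℕ) (x : X) : ℝ :=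
  ∑ j ∈ Finset.range n, φ (f^[j] x)

/-- The α-Bowen ball `B_n^α(x,ε) = {y : d_n^α(x,y) < ε}`, where
`d_n^α(x,y) = max_{0 ≤ i ≤ n-1} e^{αi} d(f^i x, f^i y)`, w.r.t. an explicit distance `d`. -/
def bowenBall (d : X → X → ℝ) (f : X → X) (α : ℝ) (n : ℕ) (x : X) (ε : ℝ) : Set X :=
  {y | ∀ i < n, Real.exp (α * i) * d (f^[i] x) (f^[i] y) < ε}

section covers

variable (d : X → X → ℝ) (f : X → X)

/-- `M^α(K,s,ε,n,φ)`: infimum over countable families of α-Bowen balls covering `K`. -/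
def Mpre (φ : X → ℝ) (α s ε : ℝ) (N : ℕ) (K : Set X) : ℝ≥0∞ :=
  ⨅ (c : ℕ → X) (m : ℕ → ℕ) (I : Set ℕ) (_ : I.Nonempty) (_ : ∀ i ∈ I, N ≤ m i)
    (_ : K ⊆ ⋃ i ∈ I, bowenBall d f α (m i) (c i) ε),
    ∑' i : I, ENNReal.ofReal
      (Real.exp (-s * sSup (birk f φ (m i) '' bowenBall d f α (m i) (c i) ε)))

/-- `M^α(K,s,ε,φ) = lim_{n→∞} M^α(K,s,ε,n,φ)` (the quantity is nondecreasing in `n`). -/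
def Mlim (φ : X → ℝ) (α s ε : ℝ) (K : Set X) : ℝ≥0∞ := ⨆ N : ℕ, Mpre d f φ α s ε N K

/-- `M^α(K,ε,φ) = inf {s ≥ 0 : M^α(K,s,ε,φ) = 0}`. -/
def Mcrit (φ : X → ℝ) (α ε : ℝ) (K : Set X) : EReal :=
  ⨅ (s : ℝ) (_ : 0 ≤ s) (_ : Mlim d f φ α s ε K = 0), (s : EReal)

/-- The α-BS dimension `dim_BS^α(f,K,φ) = lim_{ε→0} M^α(K,ε,φ)`
(the quantity is nonincreasing in `ε`). -/
def dimBS (φ : X → ℝ) (α : ℝ) (K : Set X) : EReal :=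
  ⨆ (ε : ℝ) (_ : 0 < ε), Mcrit d f φ α ε K

/-- `M^{α,1}(K,s,ε,n,φ)`: the variant with weights `exp(-s·S_{n_i}φ(x_i))` at the centers. -/
def M1pre (φ : X → ℝ) (α s ε : ℝ) (N : ℕ) (K : Set X) : ℝ≥0∞ :=
  ⨅ (c : ℕ → X) (m : ℕ → ℕ) (I : Set ℕ) (_ : I.Nonempty) (_ : ∀ i ∈ I, N ≤ m i)
    (_ : K ⊆ ⋃ i ∈ I, bowenBall d f α (m i) (c i) ε),
    ∑' i : I, ENNReal.ofReal (Real.exp (-s * birk f φ (m i) (c i)))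

def M1lim (φ : X → ℝ) (α s ε : ℝ) (K : Set X) : ℝ≥0∞ := ⨆ N : ℕ, M1pre d f φ α s ε N K

def M1crit (φ : X → ℝ) (α ε : ℝ) (K : Set X) : EReal :=
  ⨅ (s : ℝ) (_ : 0 ≤ s) (_ : M1lim d f φ α s ε K = 0), (s : EReal)

/-- The modified α-BS dimension `\widetilde{dim}_{BS}^α(f,K,φ)`. -/
def dimBS1 (φ : X → ℝ) (α : ℝ) (K : Set X) : EReal :=
  ⨆ (ε : ℝ) (_ : 0 < ε), M1crit d f φ α ε K

/-- `M^α(K,s,ε,n,1)`: covering quantity with weights `exp(-s n_i)`. -/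
def Epre (α s ε : ℝ) (N : ℕ) (K : Set X) : ℝ≥0∞ :=
  ⨅ (c : ℕ → X) (m : ℕ → ℕ) (I : Set ℕ) (_ : I.Nonempty) (_ : ∀ i ∈ I, N ≤ m i)
    (_ : K ⊆ ⋃ i ∈ I, bowenBall d f α (m i) (c i) ε),
    ∑' i : I, ENNReal.ofReal (Real.exp (-s * (m i : ℝ)))

def Elim (α s ε : ℝ) (K : Set X) : ℝ≥0∞ := ⨆ N : ℕ, Epre d f α s ε N K

def Ecrit (α ε : ℝ) (K : Set X) : EReal :=
  ⨅ (s : ℝ) (_ : 0 ≤ s) (_ : Elim d f α s ε K = 0), (s : EReal)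

/-- The α-Bowen topological entropy `h_top^{α,B}(f,K)` (i.e. `dim_BS^α(f,K,1)`,
computed with weights `exp(-s n_i)`). -/
def entB (α : ℝ) (K : Set X) : EReal := ⨆ (ε : ℝ) (_ : 0 < ε), Ecrit d f α ε K

/-- `ℳ_B^α(K,s,ε,n,h)`: the Pesin pressure covering quantity. -/
def Ppre (h : X → ℝ) (α s ε : ℝ) (N : ℕ) (K : Set X) : ℝ≥0∞ :=
  ⨅ (c : ℕ → X) (m : ℕ → ℕ) (I : Set ℕ) (_ : I.Nonempty) (_ : ∀ i ∈ I, N ≤ m i)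
    (_ : K ⊆ ⋃ i ∈ I, bowenBall d f α (m i) (c i) ε),
    ∑' i : I, ENNReal.ofReal
      (Real.exp (-s * (m i : ℝ) + sSup (birk f h (m i) '' bowenBall d f α (m i) (c i) ε)))

def Plim (h : X → ℝ) (α s ε : ℝ) (K : Set X) : ℝ≥0∞ := ⨆ N : ℕ, Ppre d f h α s ε N K

/-- `ℳ_B^α(K,ε,h) = inf {s ∈ ℝ : ℳ_B^α(K,s,ε,h) = 0}`. -/
def Pcrit (h : X → ℝ) (α ε : ℝ) (K : Set X) : EReal :=
  ⨅ (s : ℝ) (_ : Plim d f h α s ε K = 0), (s : EReal)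

/-- The α-Pesin topological pressure `P_B^α(f,K,h)`. -/
def pressureB (h : X → ℝ) (α : ℝ) (K : Set X) : EReal :=
  ⨆ (ε : ℝ) (_ : 0 < ε), Pcrit d f h α ε K

/-- `W^α(K,s,ε,n,φ)`: the weighted covering quantity. -/
def Wpre (φ : X → ℝ) (α s ε : ℝ) (N : ℕ) (K : Set X) : ℝ≥0∞ :=
  ⨅ (c : ℕ → X) (m : ℕ → ℕ) (w : ℕ → ℝ) (I : Set ℕ) (_ : I.Nonempty)
    (_ : ∀ i ∈ I, N ≤ m i) (_ : ∀ i ∈ I, 0 < w i)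
    (_ : ∀ x ∈ K, (1 : ℝ≥0∞) ≤
      ∑' i : I, (bowenBall d f α (m i) (c i) ε).indicator
        (fun _ => ENNReal.ofReal (w i)) x),
    ∑' i : I, ENNReal.ofReal (w i * Real.exp (-s * birk f φ (m i) (c i)))

def Wlim (φ : X → ℝ) (α s ε : ℝ) (K : Set X) : ℝ≥0∞ := ⨆ N : ℕ, Wpre d f φ α s ε N K

def Wcrit (φ : X → ℝ) (α ε : ℝ) (K : Set X) : EReal :=
  ⨅ (s : ℝ) (_ : 0 ≤ s) (_ : Wlim d f φ α s ε K = 0), (s : EReal)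

/-- The weighted α-BS dimension `dim_BS^{α,W}(f,K,φ)`. -/
def dimBSW (φ : X → ℝ) (α : ℝ) (K : Set X) : EReal :=
  ⨆ (ε : ℝ) (_ : 0 < ε), Wcrit d f φ α ε K

/-- `r_n(f,α,X,ε)`: the smallest cardinality of an `(n,α,ε)`-spanning set of `X`. -/
def spanNum (α ε : ℝ) (n : ℕ) : ℕ :=
  sInf {m : ℕ | ∃ E : Finset X, E.card = m ∧
    ∀ x : X, ∃ y ∈ E, ∀ i < n, Real.exp (α * i) * d (f^[i] y) (f^[i] x) < ε}

/-- `h_top^α(f,X,ε) = limsup_n (1/n) log r_n(f,α,X,ε)`. -/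
def htopSpanE (α ε : ℝ) : EReal :=
  limsup (fun n : ℕ => ((Real.log (spanNum d f α ε n) / n : ℝ) : EReal)) atTop

/-- the α-topological entropy `h_top^α(f,X) = lim_{ε→0} h_top^α(f,X,ε)`
(the quantity is nonincreasing in `ε`). -/
def htopSpan (α : ℝ) : EReal := ⨆ (ε : ℝ) (_ : 0 < ε), htopSpanE d f α ε

/-- `r_n(X, e^{-nε})`: smallest number of ε-neutralized Bowen balls needed to cover `X`. -/
def neutNum (ε : ℝ) (n : ℕ) : ℕ :=
  sInf {m : ℕ | ∃ E : Finset X, E.card = m ∧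
    ∀ x : X, ∃ y ∈ E, ∀ j < n, d (f^[j] y) (f^[j] x) < Real.exp (-(n : ℝ) * ε)}

/-- the neutralized ε-topological entropy. -/
def neutEntE (ε : ℝ) : EReal :=
  limsup (fun n : ℕ => ((Real.log (neutNum d f ε n) / n : ℝ) : EReal)) atTop

/-- the neutralized topological entropy `\tilde h_top(f,X) = inf_{ε>0} \tilde h_top(f,X,ε)`. -/
def neutEnt : EReal := ⨅ (ε : ℝ) (_ : 0 < ε), neutEntE d f ε

end covers

/-- `-log t`, valued in `[0,∞]` for `t ∈ [0,1]`, with `-log 0 = ∞`. -/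
def negLog (t : ℝ≥0∞) : ℝ≥0∞ := if t = 0 then ⊤ else ENNReal.ofReal (-Real.log t.toReal)

section measure

variable [MeasurableSpace X]

/-- `P_μ^α(f,x,φ) = lim_{ε→0} liminf_n (-log μ(B_n^α(x,ε)))/S_nφ(x)`. -/
def localBKphi (d : X → X → ℝ) (f : X → X) (φ : X → ℝ) (α : ℝ) (μ : Measure X)
    (x : X) : ℝ≥0∞ :=
  ⨆ (ε : ℝ) (_ : 0 < ε),
    liminf (fun n : ℕ =>
      negLog (μ (bowenBall d f α n x ε)) / ENNReal.ofReal (birk f φ n x)) atTop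

/-- The α-local Brin–Katok entropy `P_μ^α(f,φ) = ∫ P_μ^α(f,x,φ) dμ(x)`. -/
def BKphi (d : X → X → ℝ) (f : X → X) (φ : X → ℝ) (α : ℝ) (μ : Measure X) : ℝ≥0∞ :=
  ∫⁻ x, localBKphi d f φ α μ x ∂μ

/-- `lim_{ε→0} liminf_n (-log μ(B_n^α(x,ε)))/n`. -/
def localBKn (d : X → X → ℝ) (f : X → X) (α : ℝ) (μ : Measure X) (x : X) : ℝ≥0∞ :=
  ⨆ (ε : ℝ) (_ : 0 < ε),
    liminf (fun n : ℕ => negLog (μ (bowenBall d f α n x ε)) / (n : ℝ≥0∞)) atTop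

/-- The lower α-local Brin–Katok entropy `\underline h_μ^{BK}(f,α)`. -/
def BKn (d : X → X → ℝ) (f : X → X) (α : ℝ) (μ : Measure X) : ℝ≥0∞ :=
  ∫⁻ x, localBKn d f α μ x ∂μ

end measure

/-- diameter of a set w.r.t. an explicit distance. -/
def ediamD (d : X → X → ℝ) (U : Set X) : ℝ≥0∞ :=
  ⨆ (x ∈ U) (y ∈ U), ENNReal.ofReal (d x y)

/-- pre-Hausdorff measure at scale `δ`. -/
def hausPre (d : X → X → ℝ) (s δ : ℝ) (E : Set X) : ℝ≥0∞ :=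
  ⨅ (U : ℕ → Set X) (_ : E ⊆ ⋃ i, U i) (_ : ∀ i, ediamD d (U i) ≤ ENNReal.ofReal δ),
    ∑' i, ediamD d (U i) ^ s

/-- `s`-dimensional Hausdorff measure w.r.t. an explicit distance. -/
def hausMeas (d : X → X → ℝ) (s : ℝ) (E : Set X) : ℝ≥0∞ :=
  ⨆ (δ : ℝ) (_ : 0 < δ), hausPre d s δ E

/-- Hausdorff dimension w.r.t. an explicit distance:
`dim_H(E,d) = inf {s ≥ 0 : H^s(E) = 0}`. -/
def hausDim (d : X → X → ℝ) (E : Set X) : ℝ≥0∞ :=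
  ⨅ (s : ℝ≥0) (_ : hausMeas d s E = 0), (s : ℝ≥0∞)

/-- The left shift on `Σ_k^+ = {0,…,k-1}^ℕ`. -/
def shiftMap (k : ℕ) : (ℕ → Fin k) → (ℕ → Fin k) := fun x n => x (n + 1)

/-- The metric `d(x,y) = e^{-n(x,y)}` on `Σ_k^+`, where `n(x,y)` is the least index
at which `x` and `y` differ, and `d(x,x) = 0`. -/
def shiftDist {k : ℕ} (x y : ℕ → Fin k) : ℝ :=
  if x = y then 0 else Real.exp (-((sInf {n : ℕ | x n ≠ y n} : ℕ) : ℝ))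

/-- The subshift of finite type `Σ_A^+` determined by the incidence matrix `A`. -/
def SFT {k : ℕ} (A : Matrix (Fin k) (Fin k) ℝ) : Type :=
  {x : ℕ → Fin k // ∀ n, A (x n) (x (n + 1)) = 1}

/-- The left shift restricted to `Σ_A^+`. -/
def sftShift {k : ℕ} (A : Matrix (Fin k) (Fin k) ℝ) : SFT A → SFT A :=
  fun x => ⟨fun n => x.1 (n + 1), fun n => x.2 (n + 1)⟩

/-- The metric `d` restricted to `Σ_A^+`. -/
def sftDist {k : ℕ} (A : Matrix (Fin k) (Fin k) ℝ) : SFT A → SFT A → ℝ :=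
  fun x y => shiftDist x.1 y.1

end AlphaBS

open AlphaBS

/-
Fix `s < a < b` and a scale `ε`. The bound on the local entropy gives, for every `x ∈ K`,
infinitely many `n` with `exp (-a S_n φ(x)) ≤ μ (B_n^α(x, ε/2))`. For each `n`, a maximal disjoint
family of such half-scale balls has total centre weight `∑ exp (-a S_n φ(x_i))` at most `μ(X)`,
and the concentric balls of radius `ε` cover all the points `x` that are good at time `n`.
Raising the exponent from `a` to `b` gains a factor `exp (-(b - a) c n)`, where `0 < c ≤ φ`, so the
union of these covers over `n ≥ N` has total weight bounded by the tail of a geometric series,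
which vanishes as `N → ∞`.
-/

open scoped Topology

namespace AlphaBS

section Birkhoff

variable {X : Type*} {f : X → X} {φ : X → ℝ}

lemma birk_nonneg (hφ : ∀ x, 0 ≤ φ x) (n : ℕ) (x : X) : 0 ≤ birk f φ n x :=
  Finset.sum_nonneg fun _ _ => hφ _

lemma nat_mul_le_birk {c : ℝ} (hc : ∀ x, c ≤ φ x) (n : ℕ) (x : X) : n * c ≤ birk f φ n x := by
  simpa [birk] using
    Finset.card_nsmul_le_sum (Finset.range n) (fun j => φ (f^[j] x)) c fun _ _ => hc _

lemma birk_le_nat_mul {C : ℝ} (hC : ∀ x, φ x ≤ C) (n : ℕ) (x : X) : birk f φ n x ≤ n * C := by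
  simpa [birk] using
    Finset.sum_le_card_nsmul (Finset.range n) (fun j => φ (f^[j] x)) C fun _ _ => hC _

lemma bddAbove_range_birk (hφ : BddAbove (range φ)) (n : ℕ) : BddAbove (range (birk f φ n)) := by
  obtain ⟨C, hC⟩ := hφ
  exact ⟨n * C, forall_mem_range.2 (birk_le_nat_mul (fun x => hC (mem_range_self x)) n)⟩

lemma exp_neg_mul_birk_le {a b c : ℝ} (hab : a ≤ b) (hc : ∀ x, c ≤ φ x) (n : ℕ) (x : X) :
    Real.exp (-b * birk f φ n x) ≤
      Real.exp (-((b - a) * c)) ^ n * Real.exp (-a * birk f φ n x) := by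
  rw [← Real.exp_nat_mul, ← Real.exp_add, Real.exp_le_exp]
  have gain : (b - a) * (n * c) ≤ (b - a) * birk f φ n x :=
    mul_le_mul_of_nonneg_left (nat_mul_le_birk hc n x) (sub_nonneg.2 hab)
  linarith

end Birkhoff

section BowenBall

variable {X : Type*} [PseudoMetricSpace X] {f : X → X} {α ε : ℝ} {n : ℕ} {x y : X}

lemma self_mem_bowenBall (hε : 0 < ε) : x ∈ bowenBall dist f α n x ε := fun i _ => by
  simpa using hε

lemma mem_bowenBall_of_inter_half_nonempty
    (h : (bowenBall dist f α n x (ε / 2) ∩ bowenBall dist f α n y (ε / 2)).Nonempty) :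
    x ∈ bowenBall dist f α n y ε := by
  obtain ⟨z, hxz, hyz⟩ := h
  intro i hi
  calc Real.exp (α * i) * dist (f^[i] y) (f^[i] x)
      ≤ Real.exp (α * i) * (dist (f^[i] y) (f^[i] z) + dist (f^[i] x) (f^[i] z)) := by
        gcongr
        exact dist_triangle_right _ _ _
    _ < ε := by linarith [hxz i hi, hyz i hi]

variable [MeasurableSpace X] [OpensMeasurableSpace X]

lemma measurableSet_bowenBall (hf : Measurable f) (α : ℝ) (n : ℕ) (x : X) (ε : ℝ) :
    MeasurableSet (bowenBall dist f α n x ε) := by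
  have measurable_dist (i : ℕ) : Measurable fun y => dist (f^[i] x) (f^[i] y) :=
    (continuous_const.dist continuous_id).measurable.comp (hf.iterate i)
  simp only [bowenBall, ofPred_forall]
  exact .iInter fun i => .iInter fun _ =>
    measurableSet_lt ((measurable_dist i).const_mul _) measurable_const

lemma exists_countable_cover_bowenBall (hf : Measurable f) (μ : Measure X) [SFinite μ]
    {w : X → ℝ≥0∞} (hw : ∀ x, 0 < w x) (α ε : ℝ) (n : ℕ) :
    ∃ u : Set X, u.Countable ∧
      {x | w x ≤ μ (bowenBall dist f α n x (ε / 2))} ⊆ ⋃ y ∈ u, bowenBall dist f α n y ε ∧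
      ∑' y : u, w y ≤ μ univ := by
  set B : X → Set X := fun x => bowenBall dist f α n x (ε / 2)
  have measurable_B (x : X) : MeasurableSet (B x) := measurableSet_bowenBall hf α n x _
  have measure_pos : ∀ x ∈ {x | w x ≤ μ (B x)}, 0 < μ (B x) := fun x hx => (hw x).trans_le hx
  -- With constant radii, Vitali's lemma provides a maximal disjoint subfamily.
  obtain ⟨u, hut, hdisj, hmax⟩ := Vitali.exists_disjoint_subfamily_covering_enlargement
    B {x | w x ≤ μ (B x)} (fun _ => (1 : ℝ)) 2 one_lt_two (fun _ _ => zero_le_one) 1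
    (fun _ _ => le_rfl) fun x hx => nonempty_of_measure_ne_zero (measure_pos x hx).ne'
  have pairwise_disjoint : Pairwise (Function.onFun Disjoint fun y : u => B y) :=
    (pairwise_subtype_iff_pairwise_set u _).2 hdisj
  refine ⟨u, ?_, fun x hx => ?_, ?_⟩
  · have countable_pos := Measure.countable_meas_pos_of_disjoint_iUnion (μ := μ)
      (fun y : u => measurable_B y) pairwise_disjoint
    have all_pos : {y : u | 0 < μ (B y)} = univ :=
      eq_univ_of_forall fun y => measure_pos y (hut y.2)
    rwa [all_pos, countable_univ_iff, countable_coe_iff] at countable_pos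
  · obtain ⟨y, hy, hxy, -⟩ := hmax x hx
    exact mem_biUnion hy (mem_bowenBall_of_inter_half_nonempty hxy)
  · calc ∑' y : u, w y ≤ ∑' y : u, μ (B y) := ENNReal.tsum_le_tsum fun y => hut y.2
      _ ≤ μ univ := tsum_measure_le_measure_univ (fun y => (measurable_B y).nullMeasurableSet)
          fun _ _ hxy => (pairwise_disjoint hxy).aedisjoint

-- `M1pre` only admits nonempty families, hence the spare centre `x₀` and the extra `1`.
lemma exists_countable_nonempty_cover_bowenBall [Nonempty X] (hf : Measurable f) (μ : Measure X)
    [SFinite μ] {w : X → ℝ≥0∞} (hw : ∀ x, 0 < w x) (hw_le : ∀ x, w x ≤ 1) (α ε : ℝ) (n : ℕ) :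
    ∃ u : Set X, u.Countable ∧ u.Nonempty ∧
      {x | w x ≤ μ (bowenBall dist f α n x (ε / 2))} ⊆ ⋃ y ∈ u, bowenBall dist f α n y ε ∧
      ∑' y : u, w y ≤ 1 + μ univ := by
  obtain ⟨u, hu, hcov, hsum⟩ := exists_countable_cover_bowenBall hf μ hw α ε n
  obtain ⟨x₀⟩ := ‹Nonempty X›
  refine ⟨{x₀} ∪ u, (countable_singleton x₀).union hu, (singleton_nonempty x₀).inl,
    hcov.trans (biUnion_subset_biUnion_left subset_union_right), ?_⟩
  calc ∑' y : ({x₀} ∪ u : Set X), w y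
      ≤ ∑' y : ({x₀} : Set X), w y + ∑' y : u, w y := ENNReal.tsum_union_le w {x₀} u
    _ ≤ 1 + μ univ := by
        rw [tsum_singleton x₀ w]
        exact add_le_add (hw_le x₀) hsum

end BowenBall

section CenterWeights

variable {X : Type*} {d : X → X → ℝ} {f : X → X} {φ : X → ℝ} {α s ε : ℝ} {N : ℕ} {K : Set X}

lemma M1pre_le_tsum {ι : Type*} [Countable ι] [Nonempty ι] (c : ι → X) (m : ι → ℕ)
    (hm : ∀ i, N ≤ m i) (hcov : K ⊆ ⋃ i, bowenBall d f α (m i) (c i) ε) :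
    M1pre d f φ α s ε N K ≤ ∑' i, ENNReal.ofReal (Real.exp (-s * birk f φ (m i) (c i))) := by
  obtain ⟨g, hg⟩ := exists_injective_nat ι
  have invFun_g (i : ι) : Function.invFun g (g i) = i := Function.leftInverse_invFun hg i
  calc M1pre d f φ α s ε N K
      ≤ ∑' j : range g, ENNReal.ofReal (Real.exp
          (-s * birk f φ (m (Function.invFun g j)) (c (Function.invFun g j)))) := by
        refine iInf₂_le_of_le (c ∘ Function.invFun g) (m ∘ Function.invFun g) <|
          iInf₂_le_of_le (range g) (range_nonempty g) <|
            iInf₂_le_of_le (fun _ _ => hm _) ?_ le_rfl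
        simpa [invFun_g] using hcov
    _ = ∑' i, ENNReal.ofReal (Real.exp (-s * birk f φ (m i) (c i))) := by
        rw [← (Equiv.ofInjective g hg).tsum_eq]
        simp [invFun_g]

lemma M1pre_le_tsum_tsum {u : ℕ → Set X} (hu : ∀ k, (u k).Countable) (hne : ∃ k, (u k).Nonempty)
    (hcov : K ⊆ ⋃ k, ⋃ y ∈ u k, bowenBall d f α (k + N) y ε) :
    M1pre d f φ α s ε N K ≤
      ∑' k, ∑' y : u k, ENNReal.ofReal (Real.exp (-s * birk f φ (k + N) y)) := by
  have (k : ℕ) : Countable (u k) := (hu k).to_subtype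
  have : Nonempty (Σ k, u k) := let ⟨k, y, hy⟩ := hne; ⟨k, y, hy⟩
  rw [← ENNReal.tsum_sigma fun k (y : u k) =>
    ENNReal.ofReal (Real.exp (-s * birk f φ (k + N) y))]
  refine M1pre_le_tsum (fun p : Σ k, u k => p.2.1) (fun p => p.1 + N)
    (fun p => Nat.le_add_left _ _) fun x hx => ?_
  simpa using hcov hx

lemma M1pre_mono (d : X → X → ℝ) (f : X → X) (φ : X → ℝ) (α s ε : ℝ) (K : Set X) :
    Monotone fun N => M1pre d f φ α s ε N K := fun _ _ hN =>
  iInf₂_mono fun _ _ => iInf₂_mono fun _ _ => iInf_mono' fun hm =>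
    ⟨fun i hi => hN.trans (hm i hi), le_rfl⟩

lemma M1lim_eq_zero_of_tendsto {g : ℕ → ℝ≥0∞} (hg : Tendsto g atTop (𝓝 0))
    (h : ∀ N, M1pre d f φ α s ε N K ≤ g N) : M1lim d f φ α s ε K = 0 :=
  nonpos_iff_eq_zero.1 <|
    le_of_tendsto_of_tendsto' (tendsto_atTop_iSup (M1pre_mono d f φ α s ε K)) hg h

lemma M1crit_le_of_forall_gt (hs : 0 ≤ s) (h : ∀ b, s < b → M1lim d f φ α b ε K = 0) :
    M1crit d f φ α ε K ≤ s :=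
  EReal.le_of_forall_lt_iff_le.1 fun b hb =>
    have hb : s < b := EReal.coe_lt_coe_iff.1 hb
    iInf₂_le_of_le b (hs.trans hb.le) (iInf_le_of_le (h b hb) le_rfl)

end CenterWeights

section Comparison

variable {X : Type*} [PseudoMetricSpace X] {φ : X → ℝ} {s ε : ℝ}

lemma Mpre_le_M1pre (f : X → X) (hφ : BddAbove (range φ)) (α : ℝ) (hs : 0 ≤ s) (hε : 0 < ε)
    (N : ℕ) (K : Set X) : Mpre dist f φ α s ε N K ≤ M1pre dist f φ α s ε N K := by
  have birk_le_sSup (n : ℕ) (x : X) :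
      birk f φ n x ≤ sSup (birk f φ n '' bowenBall dist f α n x ε) :=
    le_csSup ((bddAbove_range_birk hφ n).mono (image_subset_range _ _))
      (mem_image_of_mem _ (self_mem_bowenBall hε))
  refine iInf₂_mono fun c m => iInf₂_mono fun I _ => iInf₂_mono fun _ _ =>
    ENNReal.tsum_le_tsum fun i => ENNReal.ofReal_le_ofReal (Real.exp_le_exp.2 ?_)
  exact mul_le_mul_of_nonpos_left (birk_le_sSup _ _) (neg_nonpos.2 hs)

lemma dimBS_le_dimBS1 (f : X → X) (hφ : BddAbove (range φ)) (α : ℝ) (K : Set X) :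
    dimBS dist f φ α K ≤ dimBS1 dist f φ α K :=
  iSup₂_mono fun _ hε => iInf₂_mono fun _ hs => iInf_mono' fun hM1 =>
    ⟨nonpos_iff_eq_zero.1 (hM1 ▸ iSup_mono fun N => Mpre_le_M1pre f hφ α hs hε N K), le_rfl⟩

end Comparison

section LocalEntropy

lemma ofReal_exp_le_of_negLog_div_le {t : ℝ≥0∞} {S a : ℝ} (hS : 0 ≤ S) (ha : 0 < a)
    (h : negLog t / ENNReal.ofReal S ≤ ENNReal.ofReal a) :
    ENNReal.ofReal (Real.exp (-a * S)) ≤ t := by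
  rcases eq_or_ne t ⊤ with rfl | ht
  · exact le_top
  have negLog_le : negLog t ≤ ENNReal.ofReal (a * S) := by
    rw [ENNReal.ofReal_mul ha.le]
    exact (ENNReal.div_le_iff_le_mul (.inr ENNReal.ofReal_ne_top)
      (.inl ENNReal.ofReal_ne_top)).1 h
  have ht₀ : t ≠ 0 := by
    rintro rfl
    simp [negLog] at negLog_le
  rw [negLog, if_neg ht₀, ENNReal.ofReal_le_ofReal_iff (by positivity)] at negLog_le
  refine ENNReal.ofReal_le_of_le_toReal ?_
  rw [← Real.le_log_iff_exp_le (ENNReal.toReal_pos ht₀ ht)]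
  linarith

variable {X : Type*} [MeasurableSpace X] {φ : X → ℝ} {a ε : ℝ} {x : X}

lemma frequently_exp_le_measure_bowenBall {d : X → X → ℝ} {f : X → X} {α : ℝ} {μ : Measure X}
    (hφ : ∀ x, 0 ≤ φ x) (ha : 0 < a) (hε : 0 < ε)
    (hx : localBKphi d f φ α μ x < ENNReal.ofReal a) :
    ∃ᶠ n in atTop, ENNReal.ofReal (Real.exp (-a * birk f φ n x)) ≤
      μ (bowenBall d f α n x ε) := by
  have liminf_lt : liminf (fun n => negLog (μ (bowenBall d f α n x ε)) /
      ENNReal.ofReal (birk f φ n x)) atTop < ENNReal.ofReal a :=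
    (le_iSup₂_of_le ε hε le_rfl).trans_lt hx
  exact (frequently_lt_of_liminf_lt (by isBoundedDefault) liminf_lt).mono fun n hn =>
    ofReal_exp_le_of_negLog_div_le (birk_nonneg hφ n x) ha hn.le

end LocalEntropy

section Billingsley

variable {X : Type*} [PseudoMetricSpace X] [Nonempty X] [MeasurableSpace X]
  [OpensMeasurableSpace X] {f : X → X} {φ : X → ℝ} {α a b c s ε : ℝ} {K : Set X}

lemma M1pre_le_tsum_pow (hf : Measurable f) (μ : Measure X) [SFinite μ] (hc : 0 ≤ c)
    (hcφ : ∀ x, c ≤ φ x) (ha : 0 ≤ a) (hab : a ≤ b)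
    (hK : ∀ x ∈ K, ∃ᶠ n in atTop, ENNReal.ofReal (Real.exp (-a * birk f φ n x)) ≤
      μ (bowenBall dist f α n x (ε / 2))) (N : ℕ) :
    M1pre dist f φ α b ε N K ≤
      ∑' k, ENNReal.ofReal (Real.exp (-((b - a) * c))) ^ (k + N) * (1 + μ univ) := by
  set w : ℕ → X → ℝ≥0∞ := fun n x => ENNReal.ofReal (Real.exp (-a * birk f φ n x)) with hw
  have w_pos (n : ℕ) (x : X) : 0 < w n x := ENNReal.ofReal_pos.2 (Real.exp_pos _)
  have w_le_one (n : ℕ) (x : X) : w n x ≤ 1 := by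
    rw [hw, ENNReal.ofReal_le_one, Real.exp_le_one_iff, neg_mul, neg_nonpos]
    exact mul_nonneg ha (birk_nonneg (fun x => hc.trans (hcφ x)) n x)
  choose u hu hne hcov hsum using fun n =>
    exists_countable_nonempty_cover_bowenBall hf μ (w_pos n) (w_le_one n) α ε n
  refine (M1pre_le_tsum_tsum (u := fun k => u (k + N)) (fun k => hu _) ⟨0, hne _⟩ ?_).trans
    (ENNReal.tsum_le_tsum fun k => ?_)
  · intro x hx
    obtain ⟨n, hn, hxn⟩ := frequently_atTop.1 (hK x hx) N
    refine mem_iUnion.2 ⟨n - N, ?_⟩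
    simpa only [Nat.sub_add_cancel hn] using hcov n hxn
  · set r : ℝ≥0∞ := ENNReal.ofReal (Real.exp (-((b - a) * c))) with hr
    have weight_le (y : X) :
        ENNReal.ofReal (Real.exp (-b * birk f φ (k + N) y)) ≤ r ^ (k + N) * w (k + N) y := by
      rw [hr, hw, ← ENNReal.ofReal_pow (Real.exp_pos _).le, ← ENNReal.ofReal_mul (by positivity)]
      exact ENNReal.ofReal_le_ofReal (exp_neg_mul_birk_le hab hcφ _ _)
    calc ∑' y : u (k + N), ENNReal.ofReal (Real.exp (-b * birk f φ (k + N) y))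
        ≤ ∑' y : u (k + N), r ^ (k + N) * w (k + N) y :=
          ENNReal.tsum_le_tsum fun y => weight_le y
      _ = r ^ (k + N) * ∑' y : u (k + N), w (k + N) y := ENNReal.tsum_mul_left
      _ ≤ r ^ (k + N) * (1 + μ univ) := by
          gcongr
          exact hsum _

lemma M1lim_eq_zero_of_frequently (hf : Measurable f) (μ : Measure X) [IsFiniteMeasure μ]
    (hc : 0 < c) (hcφ : ∀ x, c ≤ φ x) (ha : 0 ≤ a) (hab : a < b)
    (hK : ∀ x ∈ K, ∃ᶠ n in atTop, ENNReal.ofReal (Real.exp (-a * birk f φ n x)) ≤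
      μ (bowenBall dist f α n x (ε / 2))) :
    M1lim dist f φ α b ε K = 0 := by
  set r : ℝ≥0∞ := ENNReal.ofReal (Real.exp (-((b - a) * c))) with hr
  have r_lt_one : r < 1 := by
    rw [hr, ENNReal.ofReal_lt_one, Real.exp_lt_one_iff, neg_lt_zero]
    exact mul_pos (sub_pos.2 hab) hc
  have tsum_ne_top : ∑' k, r ^ k * (1 + μ univ) ≠ ⊤ := by
    rw [ENNReal.tsum_mul_right, ENNReal.tsum_geometric]
    exact ENNReal.mul_ne_top (ENNReal.inv_ne_top.2 (tsub_pos_of_lt r_lt_one).ne') (by finiteness)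
  exact M1lim_eq_zero_of_tendsto (ENNReal.tendsto_sum_nat_add _ tsum_ne_top)
    (M1pre_le_tsum_pow hf μ hc.le hcφ ha hab.le hK)

theorem dimBS1_le_of_localBKphi_le (hf : Measurable f) (μ : Measure X) [IsFiniteMeasure μ]
    (hc : 0 < c) (hcφ : ∀ x, c ≤ φ x) (hs : 0 ≤ s)
    (hub : ∀ x ∈ K, localBKphi dist f φ α μ x ≤ ENNReal.ofReal s) :
    dimBS1 dist f φ α K ≤ s := by
  refine iSup₂_le fun ε hε => M1crit_le_of_forall_gt hs fun b hb => ?_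
  obtain ⟨a, hsa, hab⟩ := exists_between hb
  have ha : 0 < a := hs.trans_lt hsa
  refine M1lim_eq_zero_of_frequently hf μ hc hcφ ha.le hab fun x hx => ?_
  exact frequently_exp_le_measure_bowenBall (fun x => hc.le.trans (hcφ x)) ha (half_pos hε)
    ((hub x hx).trans_lt ((ENNReal.ofReal_lt_ofReal_iff ha).2 hsa))

end Billingsley

end AlphaBS

theorem stmt7_general {X : Type*} [PseudoMetricSpace X] [Nonempty X] [MeasurableSpace X]
    [OpensMeasurableSpace X] {f : X → X} (hf : Measurable f) (μ : Measure X) [IsFiniteMeasure μ]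
    {K : Set X} {α : ℝ} {φ : X → ℝ} (hφ_bdd : BddAbove (range φ))
    (hφ : ∃ c, 0 < c ∧ ∀ x, c ≤ φ x) {s : ℝ} (hs : 0 ≤ s)
    (hub : ∀ x ∈ K, localBKphi dist f φ α μ x ≤ ENNReal.ofReal s) :
    dimBS dist f φ α K ≤ s := by
  obtain ⟨c, hc, hcφ⟩ := hφ
  exact (dimBS_le_dimBS1 f hφ_bdd α K).trans (dimBS1_le_of_localBKphi_le hf μ hc hcφ hs hub)

/-- Billingsley-type, upper bound: if `P_μ^α(f,x,φ) ≤ s` for all `x ∈ K`,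
then `dim_BS^α(f,K,φ) ≤ s`. -/
theorem stmt7 {X : Type*} [MetricSpace X] [CompactSpace X]
    [MeasurableSpace X] [BorelSpace X]
    (f : X → X) (hf : Continuous f) (μ : Measure X) [IsProbabilityMeasure μ]
    (K : Set X) (hK : MeasurableSet K) (α : ℝ) (hα : 0 ≤ α)
    (φ : X → ℝ) (hφc : Continuous φ) (hφ : ∀ x, 0 < φ x)
    (s : ℝ) (hs : 0 < s)
    (hub : ∀ x ∈ K, localBKphi dist f φ α μ x ≤ ENNReal.ofReal s) :
    dimBS dist f φ α K ≤ (s : EReal) := by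
  have : Nonempty X := nonempty_of_isProbabilityMeasure μ
  have hφ_inf : ∃ c, 0 < c ∧ ∀ x, c ≤ φ x := by
    simpa using isCompact_univ.exists_forall_le' hφc.continuousOn fun x _ => hφ x
  exact stmt7_general hf.measurable μ (isCompact_range hφc).bddAbove hφ_inf hs.le hub

end
end

section
/- Let (X,d,f) be a TDS, α ≥ 0, s > 0, n ∈ ℕ, ε > 0, and φ : X → ℝ a positive continuous function. Suppose K is a non-empty compact subset of X and c := W^α(K,s,ε,n,φ) > 0. Then there exists a Borel probability measure μ on X with μ(K) = 1 such that for every x ∈ X and every m ≥ n, μ(B_m^α(x,ε)) ≤ (1/c)·exp(−s·S_mφ(x)). -/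
open Filter Set MeasureTheory ENNReal
open scoped Classical NNReal

noncomputable section

open AlphaBS

/-!
The quantity `W^α(K,s,ε,n,φ)` is the value of a fractional covering problem, and the measure solves
the dual packing problem. Replacing the constant `1` that has to be covered by an arbitrary function
`g` on `K` turns the covering value into a sublinear functional of `g`. Hahn–Banach provides a
linear functional below it that attains the value at `1`; it is positive because functions `≤ 0` are
covered for free, hence it is integration against a measure. That measure has at least the mass
`W^α(K,s,ε,n,φ)`. A function below the indicator of one Bowen ball is covered by that ball with
weight `1`, so the measure of the ball is at most its cost, and normalising gives the claim.
-/

section Sublinear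

variable {E : Type*} [AddCommGroup E] [Module ℝ E]

lemma exists_linearMap_eq_and_le_of_sublinear {N : E → ℝ}
    (N_hom : ∀ c : ℝ, 0 < c → ∀ x, N (c • x) = c * N x)
    (N_add : ∀ x y, N (x + y) ≤ N x + N y) (x₀ : E) :
    ∃ L : E →ₗ[ℝ] ℝ, L x₀ = N x₀ ∧ ∀ x, L x ≤ N x := by
  have N_zero : N 0 = 0 := by
    have h := N_hom 2 two_pos 0
    rw [smul_zero] at h
    linarith
  have mul_le : ∀ c : ℝ, c * N x₀ ≤ N (c • x₀) := by
    intro c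
    rcases lt_trichotomy c 0 with hc | rfl | hc
    · have h := N_add (c • x₀) (-c • x₀)
      rw [← add_smul, add_neg_cancel, zero_smul, N_zero, N_hom (-c) (neg_pos.2 hc)] at h
      linarith
    · simp [N_zero]
    · exact (N_hom c hc x₀).ge
  have well_defined : ∀ c : ℝ, c • x₀ = 0 → c • N x₀ = 0 := by
    intro c hc
    rcases smul_eq_zero.1 hc with rfl | rfl
    · exact zero_smul _ _
    · rw [N_zero, smul_zero]
  obtain ⟨L, hL_ext, hL_le⟩ := exists_extension_of_le_sublinear
    (LinearPMap.mkSpanSingleton' x₀ (N x₀) well_defined) N N_hom N_add <| by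
      rintro ⟨x, hx⟩
      obtain ⟨c, rfl⟩ := Submodule.mem_span_singleton.1 hx
      exact (LinearPMap.mkSpanSingleton'_apply _ _ _ _ _).trans_le (mul_le c)
  refine ⟨L, ?_, hL_le⟩
  exact (hL_ext ⟨x₀, Submodule.mem_span_singleton_self x₀⟩).trans
    (LinearPMap.mkSpanSingleton'_apply_self _ _ _ _)

lemma exists_positiveLinearMap_eq_and_le_of_sublinear [PartialOrder E] [IsOrderedAddMonoid E]
    {N : E → ℝ} (N_hom : ∀ c : ℝ, 0 < c → ∀ x, N (c • x) = c * N x)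
    (N_add : ∀ x y, N (x + y) ≤ N x + N y) (N_nonpos : ∀ x ≤ 0, N x ≤ 0) (x₀ : E) :
    ∃ L : E →ₚ[ℝ] ℝ, L x₀ = N x₀ ∧ ∀ x, L x ≤ N x := by
  obtain ⟨L, hL_eq, hL_le⟩ := exists_linearMap_eq_and_le_of_sublinear N_hom N_add x₀
  have L_nonneg : ∀ x, 0 ≤ x → 0 ≤ L x := by
    intro x hx
    have h := (hL_le (-x)).trans (N_nonpos (-x) (neg_nonpos.2 hx))
    rwa [map_neg, neg_nonpos] at h
  exact ⟨PositiveLinearMap.mk₀ L L_nonneg, hL_eq, hL_le⟩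

end Sublinear

section WeightedCoverCost

open scoped CompactlySupported

variable {Y P : Type*}

/-- The value of the fractional covering problem for `g`: the infimum of the total cost
`∑ w p * e p` over all weights `w` such that the functions `w p • 1_{U p}` add up to at least `g`.
The index type is arbitrary, as a finite total cost makes all but countably many terms `w p * e p`
vanish. -/
def weightedCoverCost (U : P → Set Y) (e : P → ℝ≥0∞) (g : Y → ℝ≥0∞) : ℝ≥0∞ :=
  ⨅ (w : P → ℝ≥0∞) (_ : ∀ y, g y ≤ ∑' p, (U p).indicator (fun _ => w p) y), ∑' p, w p * e p

variable {U : P → Set Y} {e : P → ℝ≥0∞}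

lemma weightedCoverCost_le_tsum {g : Y → ℝ≥0∞} (w : P → ℝ≥0∞)
    (hw : ∀ y, g y ≤ ∑' p, (U p).indicator (fun _ => w p) y) :
    weightedCoverCost U e g ≤ ∑' p, w p * e p :=
  iInf₂_le w hw

lemma weightedCoverCost_mono : Monotone (weightedCoverCost U e) :=
  fun _ _ hgh => le_iInf₂ fun w hw => weightedCoverCost_le_tsum w fun y => (hgh y).trans (hw y)

lemma weightedCoverCost_zero : weightedCoverCost U e 0 = 0 :=
  le_antisymm ((weightedCoverCost_le_tsum 0 fun _ => zero_le).trans_eq (by simp)) zero_le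

lemma weightedCoverCost_add_le (g h : Y → ℝ≥0∞) :
    weightedCoverCost U e (g + h) ≤ weightedCoverCost U e g + weightedCoverCost U e h := by
  refine ENNReal.le_iInf₂_add_iInf₂ fun w hw v hv => ?_
  have hwv : ∀ y, (g + h) y ≤ ∑' p, (U p).indicator (fun _ => (w + v) p) y := fun y => by
    simp only [Pi.add_apply, indicator_add, ENNReal.tsum_add]
    exact add_le_add (hw y) (hv y)
  refine (weightedCoverCost_le_tsum (w + v) hwv).trans_eq ?_
  simp only [Pi.add_apply, add_mul, ENNReal.tsum_add]

lemma weightedCoverCost_const_mul_le {c : ℝ≥0∞} (hc₀ : c ≠ 0) (hc : c ≠ ⊤) (g : Y → ℝ≥0∞) :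
    weightedCoverCost U e (fun y => c * g y) ≤ c * weightedCoverCost U e g := by
  rw [weightedCoverCost.eq_def U e g]
  simp only [ENNReal.mul_iInf_of_ne hc₀ hc]
  refine le_iInf₂ fun w hw => ?_
  have hcw : ∀ y, c * g y ≤ ∑' p, (U p).indicator (fun _ => c * w p) y := fun y => by
    simp only [indicator_const_mul, ENNReal.tsum_mul_left]
    gcongr
    exact hw y
  refine (weightedCoverCost_le_tsum (fun p => c * w p) hcw).trans_eq ?_
  simp only [mul_assoc, ENNReal.tsum_mul_left]

lemma weightedCoverCost_const_mul {c : ℝ≥0∞} (hc₀ : c ≠ 0) (hc : c ≠ ⊤) (g : Y → ℝ≥0∞) :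
    weightedCoverCost U e (fun y => c * g y) = c * weightedCoverCost U e g := by
  refine le_antisymm (weightedCoverCost_const_mul_le hc₀ hc g) ?_
  calc c * weightedCoverCost U e g
      = c * weightedCoverCost U e (fun y => c⁻¹ * (c * g y)) := by
        simp only [ENNReal.inv_mul_cancel_left hc₀ hc]
    _ ≤ c * (c⁻¹ * weightedCoverCost U e (fun y => c * g y)) := by
        gcongr
        exact weightedCoverCost_const_mul_le (ENNReal.inv_ne_zero.2 hc) (ENNReal.inv_ne_top.2 hc₀) _
    _ = weightedCoverCost U e (fun y => c * g y) := ENNReal.mul_inv_cancel_left hc₀ hc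

lemma weightedCoverCost_ne_top_of_le_const (h_top : weightedCoverCost U e 1 ≠ ⊤) {g : Y → ℝ≥0∞}
    {c : ℝ≥0∞} (hc : c ≠ ⊤) (hg : ∀ y, g y ≤ c) : weightedCoverCost U e g ≠ ⊤ := by
  have hg' : ∀ y, g y ≤ max c 1 * (1 : Y → ℝ≥0∞) y := fun y => by
    simpa only [Pi.one_apply, mul_one] using (hg y).trans (le_max_left c 1)
  have max_ne_zero : max c 1 ≠ 0 := (one_pos.trans_le (le_max_right c 1)).ne'
  have max_ne_top : max c 1 ≠ ⊤ := max_ne_top hc ENNReal.one_ne_top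
  refine ne_top_of_le_ne_top (ENNReal.mul_ne_top max_ne_top h_top) ?_
  exact (weightedCoverCost_mono hg').trans
    (weightedCoverCost_const_mul_le max_ne_zero max_ne_top 1)

lemma weightedCoverCost_le_of_le_indicator {g : Y → ℝ≥0∞} {p : P}
    (hg : g ≤ (U p).indicator 1) : weightedCoverCost U e g ≤ e p := by
  refine (weightedCoverCost_le_tsum (Pi.single p 1) fun y => (hg y).trans ?_).trans_eq ?_
  · refine le_trans (le_of_eq ?_) (ENNReal.le_tsum p)
    simp only [Pi.single_eq_same]
    rfl
  · rw [tsum_eq_single p fun q hq => by rw [Pi.single_eq_of_ne hq, zero_mul], Pi.single_eq_same,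
      one_mul]

lemma weightedCoverCost_one_ne_top_of_iUnion_eq_univ [TopologicalSpace Y] [CompactSpace Y]
    (hU : ∀ p, IsOpen (U p)) (hU_cover : ⋃ p, U p = univ) (he : ∀ p, e p ≠ ⊤) :
    weightedCoverCost U e 1 ≠ ⊤ := by
  obtain ⟨t, ht⟩ := isCompact_univ.elim_finite_subcover U hU hU_cover.ge
  let w : P → ℝ≥0∞ := (t : Set P).indicator 1
  have hw : ∀ y, (1 : Y → ℝ≥0∞) y ≤ ∑' p, (U p).indicator (fun _ => w p) y := fun y => by
    obtain ⟨p, hpt, hyp⟩ := mem_iUnion₂.1 (ht (mem_univ y))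
    refine le_trans (le_of_eq ?_) (ENNReal.le_tsum p)
    simp [w, hyp, hpt]
  refine ne_top_of_le_ne_top ?_ (weightedCoverCost_le_tsum w hw)
  rw [tsum_eq_sum (s := t) fun p hp => by simp [w, hp]]
  exact ENNReal.sum_ne_top.2 fun p hp => by simpa [w, hp] using he p

lemma exists_positiveLinearMap_eq_and_le_weightedCoverCost [TopologicalSpace Y] [CompactSpace Y]
    (h_top : weightedCoverCost U e 1 ≠ ⊤) (g₀ : C_c(Y, ℝ)) :
    ∃ Λ : C_c(Y, ℝ) →ₚ[ℝ] ℝ,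
      ENNReal.ofReal (Λ g₀) = weightedCoverCost U e (fun y => ENNReal.ofReal (g₀ y)) ∧
        ∀ g, ENNReal.ofReal (Λ g) ≤ weightedCoverCost U e fun y => ENNReal.ofReal (g y) := by
  let C : C_c(Y, ℝ) → ℝ≥0∞ := fun g => weightedCoverCost U e fun y => ENNReal.ofReal (g y)
  have C_ne_top : ∀ g, C g ≠ ⊤ := by
    intro g
    obtain ⟨M, hM⟩ := (isCompact_range (map_continuous g)).bddAbove
    exact weightedCoverCost_ne_top_of_le_const h_top ENNReal.ofReal_ne_top
      fun y => ENNReal.ofReal_le_ofReal (hM (mem_range_self y))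
  have C_smul : ∀ c : ℝ, 0 < c → ∀ g, (C (c • g)).toReal = c * (C g).toReal := by
    intro c hc g
    have h : C (c • g) = ENNReal.ofReal c * C g := by
      rw [← weightedCoverCost_const_mul (by simpa using hc) ENNReal.ofReal_ne_top]
      simp only [C, CompactlySupportedContinuousMap.smul_apply, smul_eq_mul,
        ENNReal.ofReal_mul hc.le]
    rw [h, ENNReal.toReal_mul, ENNReal.toReal_ofReal hc.le]
  have C_add_le : ∀ g h, (C (g + h)).toReal ≤ (C g).toReal + (C h).toReal := by
    intro g h
    rw [← ENNReal.toReal_add (C_ne_top g) (C_ne_top h)]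
    refine ENNReal.toReal_mono (ENNReal.add_ne_top.2 ⟨C_ne_top g, C_ne_top h⟩) ?_
    exact (weightedCoverCost_mono fun y => ENNReal.ofReal_add_le).trans
      (weightedCoverCost_add_le _ _)
  have C_nonpos : ∀ g ≤ 0, (C g).toReal ≤ 0 := by
    intro g hg
    have h : (fun y => ENNReal.ofReal (g y)) = 0 :=
      funext fun y => ENNReal.ofReal_of_nonpos (hg y)
    simp only [C, h, weightedCoverCost_zero, ENNReal.toReal_zero, le_refl]
  obtain ⟨Λ, hΛ_eq, hΛ_le⟩ :=
    exists_positiveLinearMap_eq_and_le_of_sublinear C_smul C_add_le C_nonpos g₀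
  refine ⟨Λ, ?_, fun g => ENNReal.ofReal_le_of_le_toReal (hΛ_le g)⟩
  rw [hΛ_eq, ENNReal.ofReal_toReal (C_ne_top g₀)]

end WeightedCoverCost

section Frostman

open scoped CompactlySupported

variable {Y P : Type*} [TopologicalSpace Y] [T2Space Y] [MeasurableSpace Y] [BorelSpace Y]

lemma measure_le_of_forall_integral_le [LocallyCompactSpace Y] {μ : Measure Y} [μ.Regular]
    {V : Set Y} (hV : IsOpen V) {r : ℝ≥0∞}
    (h : ∀ g : C_c(Y, ℝ), (∀ y, g y ∈ Icc 0 1) → tsupport g ⊆ V →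
      ENNReal.ofReal (∫ y, g y ∂μ) ≤ r) :
    μ V ≤ r := by
  rw [hV.measure_eq_iSup_isCompact]
  refine iSup₂_le fun A hAV => iSup_le fun hA => ?_
  obtain ⟨g, hgA, hg_compact, hgV, hg⟩ :=
    exists_continuousMap_one_of_isCompact_subset_isOpen hA hV hAV
  let g' : C_c(Y, ℝ) := ⟨g, hg_compact⟩
  have indicator_le : ∀ y, A.indicator 1 y ≤ ENNReal.ofReal (g' y) :=
    indicator_le fun y hy => (ENNReal.ofReal_eq_one.2 (hgA hy)).ge
  calc μ A = ∫⁻ y, A.indicator 1 y ∂μ := (lintegral_indicator_one hA.measurableSet).symm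
    _ ≤ ∫⁻ y, ENNReal.ofReal (g' y) ∂μ := lintegral_mono indicator_le
    _ = ENNReal.ofReal (∫ y, g' y ∂μ) :=
        (ofReal_integral_eq_lintegral_ofReal g'.integrable (.of_forall fun y => (hg y).1)).symm
    _ ≤ r := h g' hg hgV

variable {U : P → Set Y} {e : P → ℝ≥0∞}

theorem exists_measure_univ_eq_weightedCoverCost [CompactSpace Y] (hU : ∀ p, IsOpen (U p))
    (h_top : weightedCoverCost U e 1 ≠ ⊤) :
    ∃ μ : Measure Y, μ univ = weightedCoverCost U e 1 ∧ ∀ p, μ (U p) ≤ e p := by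
  obtain ⟨Λ, hΛ_one, hΛ_le⟩ := exists_positiveLinearMap_eq_and_le_weightedCoverCost h_top
    (CompactlySupportedContinuousMap.continuousMapEquiv 1)
  refine ⟨RealRMK.rieszMeasure Λ, ?_, fun p => measure_le_of_forall_integral_le (hU p) ?_⟩
  · rw [← RealRMK.integral_rieszMeasure] at hΛ_one
    simpa [Pi.one_def] using hΛ_one
  · intro g hg hgU
    rw [RealRMK.integral_rieszMeasure]
    refine (hΛ_le g).trans (weightedCoverCost_le_of_le_indicator fun y => ?_)
    by_cases hy : y ∈ U p
    · simpa [hy] using (hg y).2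
    · simp [image_eq_zero_of_notMem_tsupport fun h => hy (hgU h)]

theorem exists_isProbabilityMeasure_le_inv_weightedCoverCost_mul {K : Set Y} (hK : IsCompact K)
    (hU : ∀ p, IsOpen (U p))
    (h_zero : weightedCoverCost (fun p => ((↑) ⁻¹' U p : Set K)) e 1 ≠ 0)
    (h_top : weightedCoverCost (fun p => ((↑) ⁻¹' U p : Set K)) e 1 ≠ ⊤) :
    ∃ μ : Measure Y, IsProbabilityMeasure μ ∧ μ K = 1 ∧
      ∀ p, μ (U p) ≤ (weightedCoverCost (fun p => ((↑) ⁻¹' U p : Set K)) e 1)⁻¹ * e p := by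
  have : CompactSpace K := isCompact_iff_compactSpace.1 hK
  obtain ⟨ν, hν_univ, hν_le⟩ := exists_measure_univ_eq_weightedCoverCost
    (fun p => (hU p).preimage continuous_subtype_val) h_top
  set C := weightedCoverCost (fun p => ((↑) ⁻¹' U p : Set K)) e 1
  let μ : Measure Y := C⁻¹ • ν.map (↑)
  have μ_apply : ∀ {s : Set Y}, MeasurableSet s → μ s = C⁻¹ * ν ((↑) ⁻¹' s) := fun hs => by
    rw [Measure.smul_apply, Measure.map_apply measurable_subtype_coe hs, smul_eq_mul]
  refine ⟨μ, ⟨?_⟩, ?_, fun p => ?_⟩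
  · rw [μ_apply .univ, preimage_univ, hν_univ, ENNReal.inv_mul_cancel h_zero h_top]
  · rw [μ_apply hK.measurableSet, Subtype.coe_preimage_self, hν_univ,
      ENNReal.inv_mul_cancel h_zero h_top]
  · rw [μ_apply (hU p).measurableSet]
    gcongr
    exact hν_le p

end Frostman

section BowenBall

variable {X : Type*} [PseudoMetricSpace X] {f : X → X}

lemma isOpen_bowenBall (hf : Continuous f) (α : ℝ) (m : ℕ) (x : X) (ε : ℝ) :
    IsOpen (bowenBall dist f α m x ε) := by
  have h : bowenBall dist f α m x ε =
      ⋂ i ∈ Iio m, {y | Real.exp (α * i) * dist (f^[i] x) (f^[i] y) < ε} := by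
    ext y
    simp [bowenBall]
  rw [h]
  refine (finite_Iio m).isOpen_biInter fun i _ => isOpen_lt ?_ continuous_const
  have := hf.iterate i
  fun_prop

lemma mem_bowenBall_self {ε : ℝ} (hε : 0 < ε) (α : ℝ) (m : ℕ) (x : X) :
    x ∈ bowenBall dist f α m x ε := fun i _ => by
  rwa [dist_self, mul_zero]

end BowenBall

section Reindexing

lemma exists_nat_reindexing_of_countable {P : Type*} {S : Set P} (hS : S.Countable)
    (hS_ne : S.Nonempty) :
    ∃ (I : Set ℕ) (r : ℕ → P), I.Nonempty ∧ MapsTo r I S ∧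
      ∀ F : P → ℝ≥0∞, F.support ⊆ S → ∑' i : I, F (r i) = ∑' p, F p := by
  have : Nonempty P := hS_ne.to_type
  obtain ⟨j, hj⟩ := countable_iff_exists_injOn.1 hS
  have hr : BijOn (Function.invFunOn j S) (j '' S) S :=
    hj.bijOn_image.symm hj.bijOn_image.invOn_invFunOn.symm
  refine ⟨j '' S, Function.invFunOn j S, hS_ne.image j, hr.mapsTo, fun F hF => ?_⟩
  refine Function.Injective.tsum_eq (injOn_iff_injective.1 hr.injOn) ?_
  rwa [range_domRestrict, hr.image_eq]

variable {X P : Type*} {d : X → X → ℝ} {f : X → X} {φ : X → ℝ} {α s ε : ℝ} {n : ℕ} {K : Set X}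

lemma Wpre_le_tsum (hK : K.Nonempty) (c : P → X) (m : P → ℕ) (hm : ∀ p, n ≤ m p) (w : P → ℝ≥0∞)
    (hw : ∀ x ∈ K, 1 ≤ ∑' p, (bowenBall d f α (m p) (c p) ε).indicator (fun _ => w p) x) :
    Wpre d f φ α s ε n K ≤
      ∑' p, w p * ENNReal.ofReal (Real.exp (-s * birk f φ (m p) (c p))) := by
  by_cases h_top : ∑' p, w p * ENNReal.ofReal (Real.exp (-s * birk f φ (m p) (c p))) = ⊤
  · exact h_top.symm ▸ le_top
  have cost_ne_zero : ∀ p, ENNReal.ofReal (Real.exp (-s * birk f φ (m p) (c p))) ≠ 0 :=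
    fun p => (ENNReal.ofReal_pos.2 (Real.exp_pos _)).ne'
  have w_ne_top : ∀ p, w p ≠ ⊤ := fun p hp =>
    ENNReal.ne_top_of_tsum_ne_top h_top p (by rw [hp, ENNReal.top_mul (cost_ne_zero p)])
  have support_countable : w.support.Countable :=
    (Summable.countable_support_ennreal h_top).mono fun p hp => mul_ne_zero hp (cost_ne_zero p)
  have support_nonempty : w.support.Nonempty := by
    obtain ⟨x, hx⟩ := hK
    by_contra h
    have w_zero : w = 0 := Function.support_eq_empty_iff.1 (not_nonempty_iff_eq_empty.1 h)
    simpa [w_zero] using hw x hx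
  obtain ⟨I, r, hI, hr, tsum_comp⟩ :=
    exists_nat_reindexing_of_countable support_countable support_nonempty
  refine iInf_le_of_le (fun i => c (r i)) <| iInf_le_of_le (fun i => m (r i)) <|
    iInf_le_of_le (fun i => (w (r i)).toReal) <| iInf_le_of_le I <| iInf_le_of_le hI <|
    iInf_le_of_le (fun i _ => hm (r i)) <|
    iInf_le_of_le (fun i hi => ENNReal.toReal_pos (hr hi) (w_ne_top _)) <|
    iInf_le_of_le (fun x hx => (hw x hx).trans_eq ?_) (le_of_eq ?_)
  · simp only [ENNReal.ofReal_toReal (w_ne_top _)]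
    refine (tsum_comp (fun p => (bowenBall d f α (m p) (c p) ε).indicator (fun _ => w p) x) ?_).symm
    exact fun p hp hwp => hp (by simp [hwp])
  · simp only [ENNReal.ofReal_mul ENNReal.toReal_nonneg, ENNReal.ofReal_toReal (w_ne_top _)]
    exact tsum_comp (fun p => w p * ENNReal.ofReal (Real.exp (-s * birk f φ (m p) (c p))))
      (Function.support_mul_subset_left _ _)

lemma Wpre_le_weightedCoverCost (hK : K.Nonempty) :
    Wpre d f φ α s ε n K ≤ weightedCoverCost
      (fun p : X × {m // n ≤ m} => ((↑) ⁻¹' bowenBall d f α p.2 p.1 ε : Set K))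
      (fun p => ENNReal.ofReal (Real.exp (-s * birk f φ p.2 p.1))) 1 := by
  refine le_iInf₂ fun w hw => ?_
  refine Wpre_le_tsum hK (fun p : X × {m // n ≤ m} => p.1) (fun p => p.2) (fun p => p.2.2) w ?_
  exact fun x hx => hw ⟨x, hx⟩

end Reindexing

theorem stmt10_general {X : Type*} [MetricSpace X] [MeasurableSpace X] [BorelSpace X]
    (f : X → X) (hf : Continuous f) (α s : ℝ) (n : ℕ) (ε : ℝ) (hε : 0 < ε) (φ : X → ℝ)
    (K : Set X) (hK : IsCompact K) (hKne : K.Nonempty) (hc : 0 < Wpre dist f φ α s ε n K) :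
    ∃ μ : Measure X, IsProbabilityMeasure μ ∧ μ K = 1 ∧
      ∀ x : X, ∀ m : ℕ, n ≤ m →
        μ (bowenBall dist f α m x ε) ≤
          (Wpre dist f φ α s ε n K)⁻¹ * ENNReal.ofReal (Real.exp (-s * birk f φ m x)) := by
  let U : X × {m // n ≤ m} → Set X := fun p => bowenBall dist f α p.2 p.1 ε
  let e : X × {m // n ≤ m} → ℝ≥0∞ := fun p => ENNReal.ofReal (Real.exp (-s * birk f φ p.2 p.1))
  have U_open : ∀ p, IsOpen (U p) := fun p => isOpen_bowenBall hf α p.2 p.1 ε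
  have U_cover : ⋃ p, ((↑) ⁻¹' U p : Set K) = univ := eq_univ_of_forall fun x =>
    mem_iUnion.2 ⟨(x, ⟨n, le_rfl⟩), mem_bowenBall_self hε α n x.1⟩
  have W_le : Wpre dist f φ α s ε n K ≤ weightedCoverCost (fun p => ((↑) ⁻¹' U p : Set K)) e 1 :=
    Wpre_le_weightedCoverCost hKne
  have : CompactSpace K := isCompact_iff_compactSpace.1 hK
  have cost_ne_top : weightedCoverCost (fun p => ((↑) ⁻¹' U p : Set K)) e 1 ≠ ⊤ :=
    weightedCoverCost_one_ne_top_of_iUnion_eq_univ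
      (fun p => (U_open p).preimage continuous_subtype_val) U_cover fun _ => ENNReal.ofReal_ne_top
  obtain ⟨μ, hμ, hμK, hμ_le⟩ :=
    exists_isProbabilityMeasure_le_inv_weightedCoverCost_mul hK U_open (hc.trans_le W_le).ne'
      cost_ne_top
  refine ⟨μ, hμ, hμK, fun x m hm => (hμ_le (x, ⟨m, hm⟩)).trans ?_⟩
  gcongr

/-- dynamical Frostman lemma: if `c := W^α(K,s,ε,n,φ) > 0` then there is a
Borel probability measure `μ` with `μ(K) = 1` and
`μ(B_m^α(x,ε)) ≤ (1/c)·exp(-s·S_mφ(x))` for all `x` and all `m ≥ n`. -/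
theorem stmt10 {X : Type*} [MetricSpace X] [CompactSpace X]
    [MeasurableSpace X] [BorelSpace X]
    (f : X → X) (hf : Continuous f) (α : ℝ) (hα : 0 ≤ α)
    (s : ℝ) (hs : 0 < s) (n : ℕ) (ε : ℝ) (hε : 0 < ε)
    (φ : X → ℝ) (hφc : Continuous φ) (hφ : ∀ x, 0 < φ x)
    (K : Set X) (hK : IsCompact K) (hKne : K.Nonempty)
    (hc : 0 < Wpre dist f φ α s ε n K) :
    ∃ μ : Measure X, IsProbabilityMeasure μ ∧ μ K = 1 ∧
      ∀ x : X, ∀ m : ℕ, n ≤ m →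
        μ (bowenBall dist f α m x ε) ≤
          (Wpre dist f φ α s ε n K)⁻¹ * ENNReal.ofReal (Real.exp (-s * birk f φ m x)) :=
  stmt10_general f hf α s n ε hε φ K hK hKne hc

end
end
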